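/- arXiv:2601.13799 — 8 statements merged into one kernel-verified Lean document; each statement's English description precedes it below -/
import Mathlib

section
/- Let n ∈ ℕ, ε > 0, positive parameters k̄₀, …, k̄ₙ, c̄₁, …, c̄ₙ, a constant input value v ∈ ℝ, and a continuous μ : ℝ → ℝ with μ(v) > 0. Suppose (z, z₁, …, zₙ) ∈ ℝ^{n+1} is an equilibrium of the FrBD_{n+1}-GKV model, i.e., 0 = −(|v|_ε / μ(v)) k̄₀ (z − Σ_{i=1}^n z_i) + v and 0 = −(k̄_i/c̄_i) z_i + (k̄₀/c̄_i)(z − Σ_{j=1}^n z_j) for i = 1, …, n. Then the friction force f := k̄₀(z − Σ_{i=1}^n z_i) satisfies f = (v/|v|_ε) μ(v), z_i = f / k̄_i for all i ∈ {1, …, n}, and z = Σ_{i=0}^n f / k̄_i. -/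
/-!
Since `ε > 0`, the regularized absolute value is strictly positive, so the first equilibrium
equation can be solved for the force `f = k̄₀ (z - ∑ zᵢ)`. Clearing `c̄ᵢ` in the remaining equations
gives `k̄ᵢ zᵢ = f`, and `z` is the sum of `z - ∑ zᵢ = f / k̄₀` and the `zᵢ = f / k̄ᵢ`.
-/

/-- Regularized absolute value `|y|_ε = √(y² + ε)`. -/
noncomputable def regAbs (ε y : ℝ) : ℝ := Real.sqrt (y ^ 2 + ε)

/-- **Steady-state solution of the FrBD_{n+1}-GKV model.** At an equilibrium of the GKV
model with constant input `v`, the friction force `f = k̄₀ (z − Σᵢ zᵢ)` equals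
`(v / |v|_ε) μ(v)`, each internal deformation is `zᵢ = f / k̄ᵢ`, and the total bristle
deflection is `z = Σ_{i=0}^n f / k̄ᵢ`. -/
theorem frbd_gkv_steady_state
    (n : ℕ) (ε : ℝ) (kbar : Fin (n + 1) → ℝ) (cbar : Fin n → ℝ)
    (v : ℝ) (μ : ℝ → ℝ) (z : ℝ) (zi : Fin n → ℝ)
    (hε : 0 < ε) (hkbar : ∀ i, 0 < kbar i) (hcbar : ∀ i, 0 < cbar i)
    (hμcont : Continuous μ) (hμv : 0 < μ v)
    (heq1 : 0 = -(regAbs ε v / μ v) * kbar 0 * (z - ∑ i, zi i) + v)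
    (heq2 : ∀ i : Fin n,
      0 = -(kbar i.succ / cbar i) * zi i + (kbar 0 / cbar i) * (z - ∑ j, zi j)) :
    kbar 0 * (z - ∑ i, zi i) = (v / regAbs ε v) * μ v ∧
    (∀ i : Fin n, zi i = kbar 0 * (z - ∑ j, zi j) / kbar i.succ) ∧
    z = ∑ i : Fin (n + 1), kbar 0 * (z - ∑ j, zi j) / kbar i := by
  have hr : 0 < regAbs ε v := Real.sqrt_pos.mpr (by positivity)
  have hzi : ∀ i : Fin n, zi i = kbar 0 * (z - ∑ j, zi j) / kbar i.succ := by
    intro i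
    have hk := hkbar i.succ
    have hc := hcbar i
    have h := heq2 i
    generalize z - ∑ j, zi j = w at h ⊢
    field_simp at h ⊢
    linarith
  refine ⟨?_, hzi, ?_⟩
  · generalize z - ∑ j, zi j = w at heq1 ⊢
    field_simp at heq1 ⊢
    linarith
  · -- The `i = 0` term is the elastic part `z - ∑ zᵢ`; the remaining terms are the `zᵢ`.
    rw [Fin.sum_univ_succ, mul_div_cancel_left₀ _ (hkbar 0).ne',
      ← Finset.sum_congr rfl fun i _ => hzi i]
    ring
end

section
/- Let T > 0, n ∈ ℕ, ε ≥ 0, p > 0, positive parameters k̄₀, …, k̄ₙ, τ₁, …, τₙ, a continuous v : (0,T) → ℝ, and a continuous μ : ℝ → ℝ with μ(w) > 0 for all w. Suppose z, f₁, …, fₙ : (0,T) → ℝ are differentiable and satisfy the FrBD_{n+1}-GM equations ż(t) = −(|v(t)|_ε/μ(v(t)))(k̄₀ z(t) + Σ_{i=1}^n f_i(t)) + v(t) and ḟ_i(t) = −τ_i⁻¹ f_i(t) + k̄_i ż(t). Define f(t) := k̄₀ z(t) + Σ_{i=1}^n f_i(t) and V(t) := (1/2) p k̄₀ z(t)² +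 (1/2) Σ_{i=1}^n (p/k̄_i) f_i(t)². Then, for all t ∈ (0,T), V'(t) = p f(t) v(t) − (p |v(t)|_ε / μ(v(t))) f(t)² − Σ_{i=1}^n (p/(τ_i k̄_i)) f_i(t)². -/
/-!
Differentiating `V` along the flow gives `p k̄₀ z ż + Σᵢ (p / k̄ᵢ) fᵢ ḟᵢ`. Inserting
`ḟᵢ = -τᵢ⁻¹ fᵢ + k̄ᵢ ż` cancels the stiffness `k̄ᵢ` in the driving term, so that all the terms in `ż`
combine to `p (k̄₀ z + Σᵢ fᵢ) ż = p f ż`, while the relaxation terms give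
`-Σᵢ (p / (τᵢ k̄ᵢ)) fᵢ²`. Substituting the equation for `ż` yields the claim.
-/

open Set

/-- **Derivative of the Lyapunov function along the FrBD_{n+1}-GM dynamics.**
With `f(t) = k̄₀ z(t) + Σᵢ fᵢ(t)` and
`V(t) = ½ p k̄₀ z(t)² + ½ Σᵢ (p / k̄ᵢ) fᵢ(t)²`, one has
`V̇(t) = p f(t) v(t) − (p |v(t)|_ε / μ(v(t))) f(t)² − Σᵢ (p/(τᵢ k̄ᵢ)) fᵢ(t)²`. -/
theorem frbd_gm_lyapunov_derivative
    (T ε p : ℝ) (n : ℕ) (kbar : Fin (n + 1) → ℝ) (τ : Fin n → ℝ)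
    (μ v : ℝ → ℝ) (z : ℝ → ℝ) (f : Fin n → ℝ → ℝ)
    (hT : 0 < T) (hε : 0 ≤ ε) (hp : 0 < p)
    (hkbar : ∀ i, 0 < kbar i) (hτ : ∀ i, 0 < τ i)
    (hv : ContinuousOn v (Ioo 0 T)) (hμcont : Continuous μ)
    (hμ : ∀ w : ℝ, 0 < μ w)
    (hz : ∀ t ∈ Ioo 0 T, HasDerivAt z
      (-(regAbs ε (v t) / μ (v t)) * (kbar 0 * z t + ∑ i, f i t) + v t) t)
    (hf : ∀ i : Fin n, ∀ t ∈ Ioo 0 T, HasDerivAt (f i)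
      (-(τ i)⁻¹ * f i t +
        kbar i.succ * (-(regAbs ε (v t) / μ (v t)) * (kbar 0 * z t + ∑ j, f j t) + v t)) t) :
    ∀ t ∈ Ioo 0 T,
      HasDerivAt
        (fun s => (1 / 2) * p * kbar 0 * (z s) ^ 2
          + (1 / 2) * ∑ i, (p / kbar i.succ) * (f i s) ^ 2)
        (p * (kbar 0 * z t + ∑ i, f i t) * v t
          - (p * regAbs ε (v t) / μ (v t)) * (kbar 0 * z t + ∑ i, f i t) ^ 2
          - ∑ i, (p / (τ i * kbar i.succ)) * (f i t) ^ 2) t := by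
  intro t ht
  have hz' := hz t ht
  have hf' := fun i => hf i t ht
  -- `w` stands for the common rate `ż(t)`, which also drives every Maxwell branch.
  set w := -(regAbs ε (v t) / μ (v t)) * (kbar 0 * z t + ∑ i, f i t) + v t with hw
  have hV := ((hz'.pow 2).const_mul ((1 / 2) * p * kbar 0)).add
    ((HasDerivAt.fun_sum (u := Finset.univ) fun i _ =>
      ((hf' i).pow 2).const_mul (p / kbar i.succ)).const_mul (1 / 2))
  refine hV.congr_deriv ?_
  have hterm : ∀ i : Fin n,
      p / kbar i.succ * (((2 : ℕ) : ℝ) * f i t ^ (2 - 1) * (-(τ i)⁻¹ * f i t + kbar i.succ * w))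
        = 2 * p * w * f i t - 2 * (p / (τ i * kbar i.succ) * f i t ^ 2) := by
    intro i
    have h1 := (hkbar i.succ).ne'
    have h2 := (hτ i).ne'
    push_cast
    field_simp
    ring
  rw [Finset.sum_congr rfl fun i _ => hterm i, Finset.sum_sub_distrib, ← Finset.mul_sum,
    ← Finset.mul_sum]
  -- What remains is `p f ż - D = p f v - (p |v|_ε / μ) f² - D`, the expansion of `ż`.
  rw [hw]
  push_cast
  ring
end

section
/- Let T > 0, n ∈ ℕ, ε ≥ 0, p > 0, positive parameters k̄₀, …, k̄ₙ, c̄₁, …, c̄ₙ, a continuous v : (0,T) → ℝ, and a continuous μ : ℝ → ℝ with μ(w) > 0 for all w. Suppose z, z₁, …, zₙ : (0,T) → ℝ are differentiable and satisfy the FrBD_{n+1}-GKV equations ż(t) = −(|v(t)|_ε/μ(v(t))) k̄₀ (z(t) − Σ_{i=1}^n z_i(t)) + v(t) and ż_i(t) = −(k̄_i/c̄_i) z_i(t) + (k̄₀/c̄_i)(z(t) − Σ_{j=1}^n z_j(t)). Define z₀(t) := z(t) − Σ_{i=1}^n z_i(t), f(t) := k̄₀ z₀(t), and V(t) := (1/2)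 p k̄₀ z₀(t)² + (1/2) Σ_{i=1}^n p k̄_i z_i(t)². Then, for all t ∈ (0,T), V'(t) = p f(t) v(t) − (p |v(t)|_ε / μ(v(t))) f(t)² − Σ_{i=1}^n (p/c̄_i) (k̄_i z_i(t) − k̄₀ z₀(t))². -/
/-!
The chain rule gives `V̇ = p k̄₀ z₀ (ż - ∑ żᵢ) + ∑ p k̄ᵢ zᵢ żᵢ`. The term with `ż` yields the
supplied power `p f v` and the sliding loss `(p |v|_ε / μ(v)) f²`. The remaining terms combine to
`-∑ p (k̄₀ z₀ - k̄ᵢ zᵢ) żᵢ`, and since `c̄ᵢ żᵢ = k̄₀ z₀ - k̄ᵢ zᵢ` this is the viscous loss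
`-∑ (p / c̄ᵢ) (k̄ᵢ zᵢ - k̄₀ z₀)²`.
-/

open Set

/-- **Derivative of the Lyapunov function along the FrBD_{n+1}-GKV dynamics.**
With `z₀(t) = z(t) − Σᵢ zᵢ(t)`, `f(t) = k̄₀ z₀(t)`, and
`V(t) = ½ p k̄₀ z₀(t)² + ½ Σᵢ p k̄ᵢ zᵢ(t)²`, one has
`V̇(t) = p f(t) v(t) − (p |v(t)|_ε / μ(v(t))) f(t)² − Σᵢ (p/c̄ᵢ)(k̄ᵢ zᵢ(t) − k̄₀ z₀(t))²`. -/
theorem frbd_gkv_lyapunov_derivative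
    (T ε p : ℝ) (n : ℕ) (kbar : Fin (n + 1) → ℝ) (cbar : Fin n → ℝ)
    (μ v : ℝ → ℝ) (z : ℝ → ℝ) (zi : Fin n → ℝ → ℝ)
    (hT : 0 < T) (hε : 0 ≤ ε) (hp : 0 < p)
    (hkbar : ∀ i, 0 < kbar i) (hcbar : ∀ i, 0 < cbar i)
    (hv : ContinuousOn v (Ioo 0 T)) (hμcont : Continuous μ)
    (hμ : ∀ w : ℝ, 0 < μ w)
    (hz : ∀ t ∈ Ioo 0 T, HasDerivAt z
      (-(regAbs ε (v t) / μ (v t)) * kbar 0 * (z t - ∑ i, zi i t) + v t) t)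
    (hzi : ∀ i : Fin n, ∀ t ∈ Ioo 0 T, HasDerivAt (zi i)
      (-(kbar i.succ / cbar i) * zi i t + (kbar 0 / cbar i) * (z t - ∑ j, zi j t)) t) :
    ∀ t ∈ Ioo 0 T,
      HasDerivAt
        (fun s => (1 / 2) * p * kbar 0 * (z s - ∑ i, zi i s) ^ 2
          + (1 / 2) * ∑ i, p * kbar i.succ * (zi i s) ^ 2)
        (p * (kbar 0 * (z t - ∑ i, zi i t)) * v t
          - (p * regAbs ε (v t) / μ (v t)) * (kbar 0 * (z t - ∑ i, zi i t)) ^ 2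
          - ∑ i, (p / cbar i) *
              (kbar i.succ * zi i t - kbar 0 * (z t - ∑ j, zi j t)) ^ 2) t := by
  intro t ht
  have hsum := HasDerivAt.fun_sum (u := Finset.univ) fun i _ => hzi i t ht
  have h0 := (((hz t ht).sub hsum).fun_pow 2).const_mul ((1 / 2) * p * kbar 0)
  have h1 := (HasDerivAt.fun_sum (u := Finset.univ) fun i _ =>
    ((hzi i t ht).fun_pow 2).const_mul (p * kbar i.succ)).const_mul (1 / 2 : ℝ)
  refine (h0.add h1).congr_deriv ?_
  simp only [Pi.sub_apply]
  generalize hz0 : z t - ∑ j, zi j t = z0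
  -- Each dashpot dissipates the power `p (k̄₀ z₀ - k̄ᵢ zᵢ) żᵢ`, since `c̄ᵢ żᵢ = k̄₀ z₀ - k̄ᵢ zᵢ`.
  have key : ∑ i, (p / cbar i) * (kbar i.succ * zi i t - kbar 0 * z0) ^ 2
      = p * kbar 0 * z0 *
          ∑ i, (-(kbar i.succ / cbar i) * zi i t + (kbar 0 / cbar i) * z0)
        - (1 / 2) * ∑ i, p * kbar i.succ * (((2 : ℕ) : ℝ) * zi i t ^ (2 - 1) *
          (-(kbar i.succ / cbar i) * zi i t + (kbar 0 / cbar i) * z0)) := by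
    rw [Finset.mul_sum, Finset.mul_sum, ← Finset.sum_sub_distrib]
    refine Finset.sum_congr rfl fun i _ => ?_
    push_cast
    ring
  rw [key]
  push_cast
  ring
end

section
/- Let n ∈ ℕ, ε ≥ 0 with |y|_ε ≥ |y| for all y ∈ ℝ, positive parameters k̄₀, …, k̄ₙ, τ₁, …, τₙ, a continuous and bounded input v : [0,∞) → ℝ, and a continuous μ : ℝ → ℝ with μ(w) ≥ μ_min for all w for some μ_min > 0 and with μ bounded above on the range of v. Then every differentiable solution (z, f₁, …, fₙ) : [0,∞) → ℝ^{n+1} of the FrBD_{n+1}-GM system ż(t) = −(|v(t)|_ε/μ(v(t)))(k̄₀ z(t) + Σ_{i=1}^n f_i(t)) + v(t), ḟ_i(t) = −τ_i⁻¹ f_i(t) + k̄_i ż(t), is bounded for all times, i.e., sup_{t ≥ 0} ‖(z(t), f₁(t), …, fₙ(t))‖ < ∞. -/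
/-!
The stored energy `W = k̄₀ z² / 2 + ∑ fᵢ² / (2 k̄ᵢ)` satisfies, along solutions,
`Ẇ = -a g² + v g - D`, where `a = |v|_ε / μ(v)`, `g = k̄₀ z + ∑ fᵢ` is the total bristle force
and `D = ∑ fᵢ² / (τᵢ k̄ᵢ)` is the viscous dissipation. If `M` bounds `μ ∘ v` and `V` bounds `|v|`,
then `a ≥ |v| / M`, so `-a g² + v g` is nonpositive once `|g| ≥ M`, and is at most `V M`
otherwise. Hence `Ẇ ≤ 0` whenever `|g| ≥ M` or `D ≥ V M`; both can fail only when `W` is below an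
explicit level (`energy_dichotomy`). A function that is nonincreasing above a level is bounded
(`bounded_of_deriv_nonpos_above`), and `W` controls every component of the state.
-/

open Set

/-- Barrier argument: comparison with the lines `t ↦ C + δ t`, followed by `δ → 0`. -/
lemma bounded_of_deriv_nonpos_above (W W' : ℝ → ℝ) (C : ℝ)
    (hW : ∀ t, 0 ≤ t → HasDerivAt W (W' t) t) (h0 : W 0 ≤ C)
    (h : ∀ t, 0 ≤ t → C ≤ W t → W' t ≤ 0) : ∀ t, 0 ≤ t → W t ≤ C := by
  intro t ht
  have key : ∀ δ : ℝ, 0 < δ → W t ≤ C + δ * t := by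
    intro δ hδ
    refine image_le_of_deriv_right_lt_deriv_boundary (f := W) (f' := W') (a := 0) (b := t)
      (B := fun x => C + δ * x) (B' := fun _ => δ)
      (fun x hx => (hW x hx.1).continuousAt.continuousWithinAt)
      (fun x hx => (hW x hx.1).hasDerivWithinAt) (by simpa using h0) ?_ ?_ (right_mem_Icc.2 ht)
    · intro x
      simpa using ((hasDerivAt_id x).const_mul δ).const_add C
    · intro x hx hEq
      have : 0 ≤ δ * x := mul_nonneg hδ.le hx.1
      exact (h x hx.1 (by rw [hEq]; linarith)).trans_lt hδ
  refine le_of_forall_pos_le_add fun η hη => (key (η / (t + 1)) (by positivity)).trans ?_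
  have : η / (t + 1) * t ≤ η := by
    rw [div_mul_eq_mul_div, div_le_iff₀ (by positivity)]
    nlinarith
  linarith

/-- At a sufficiently high energy level, the dissipation is at least `P` or the total force is at
least `M`: small dissipation bounds all `f i`, and then a small total force bounds `z`. -/
lemma energy_dichotomy {n : ℕ} (k₀ : ℝ) (k τ : Fin n → ℝ) (M P : ℝ) (hk₀ : 0 < k₀)
    (hk : ∀ i, 0 < k i) (hτ : ∀ i, 0 < τ i) :
    ∃ C : ℝ, ∀ (z : ℝ) (f : Fin n → ℝ), C ≤ k₀ * z ^ 2 / 2 + ∑ i, f i ^ 2 / (2 * k i) →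
      P ≤ ∑ i, f i ^ 2 / (τ i * k i) ∨ M ≤ |k₀ * z + ∑ i, f i| := by
  set F : ℝ := ∑ i, (τ i * k i * P + 1) with hF
  refine ⟨k₀ * ((M + F) / k₀) ^ 2 / 2 + ∑ i, τ i * P / 2, fun z f hC => ?_⟩
  by_contra! hcon
  obtain ⟨hD, hg⟩ := hcon
  have hfi : ∀ i, f i ^ 2 ≤ τ i * k i * P := by
    intro i
    have h1 : f i ^ 2 / (τ i * k i) ≤ ∑ j, f j ^ 2 / (τ j * k j) :=
      Finset.single_le_sum (f := fun j => f j ^ 2 / (τ j * k j))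
        (fun j _ => by have := hτ j; have := hk j; positivity) (Finset.mem_univ i)
    have h2 := h1.trans hD.le
    rw [div_le_iff₀ (mul_pos (hτ i) (hk i))] at h2
    linarith
  have hsum : |∑ i, f i| ≤ F := by
    refine (Finset.abs_sum_le_sum_abs _ _).trans (Finset.sum_le_sum fun i _ => ?_)
    nlinarith [hfi i, sq_abs (f i), sq_nonneg (|f i| - 1), abs_nonneg (f i)]
  have hWf : ∑ i, f i ^ 2 / (2 * k i) ≤ ∑ i, τ i * P / 2 := by
    refine Finset.sum_le_sum fun i _ => ?_
    rw [div_le_iff₀ (mul_pos two_pos (hk i))]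
    nlinarith [hfi i]
  have hz : |z| < (M + F) / k₀ := by
    rw [lt_div_iff₀ hk₀]
    have h1 : |k₀ * z| ≤ |k₀ * z + ∑ i, f i| + |∑ i, f i| := by
      simpa using abs_sub (k₀ * z + ∑ i, f i) (∑ i, f i)
    rw [abs_mul, abs_of_pos hk₀] at h1
    linarith
  have hz2 : z ^ 2 < ((M + F) / k₀) ^ 2 := by
    rw [← sq_abs]
    exact pow_lt_pow_left₀ hz (abs_nonneg z) two_ne_zero
  have := mul_lt_mul_of_pos_left hz2 hk₀
  linarith

/-- **Boundedness of the FrBD_{n+1}-GM model.** For any bounded continuous input `v`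
and any friction coefficient `μ ≥ μ_min > 0` bounded above along `v`, every
differentiable solution `(z, f₁, …, fₙ)` of the FrBD_{n+1}-GM system is bounded. -/
theorem frbd_gm_bounded
    (ε : ℝ) (n : ℕ) (kbar : Fin (n + 1) → ℝ) (τ : Fin n → ℝ)
    (μ v : ℝ → ℝ) (z : ℝ → ℝ) (f : Fin n → ℝ → ℝ) (μmin : ℝ)
    (hε : 0 ≤ ε) (hreg : ∀ y : ℝ, |y| ≤ regAbs ε y)
    (hkbar : ∀ i, 0 < kbar i) (hτ : ∀ i, 0 < τ i)
    (hv : ContinuousOn v (Ici 0)) (hvbdd : ∃ M : ℝ, ∀ t : ℝ, 0 ≤ t → |v t| ≤ M)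
    (hμcont : Continuous μ) (hμmin : 0 < μmin) (hμ : ∀ w : ℝ, μmin ≤ μ w)
    (hμbdd : ∃ Mμ : ℝ, ∀ t : ℝ, 0 ≤ t → μ (v t) ≤ Mμ)
    (hz : ∀ t : ℝ, 0 ≤ t → HasDerivAt z
      (-(regAbs ε (v t) / μ (v t)) * (kbar 0 * z t + ∑ i, f i t) + v t) t)
    (hf : ∀ i : Fin n, ∀ t : ℝ, 0 ≤ t → HasDerivAt (f i)
      (-(τ i)⁻¹ * f i t +
        kbar i.succ * (-(regAbs ε (v t) / μ (v t)) * (kbar 0 * z t + ∑ j, f j t) + v t)) t) :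
    ∃ C : ℝ, ∀ t : ℝ, 0 ≤ t → |z t| ≤ C ∧ ∀ i : Fin n, |f i t| ≤ C := by
  obtain ⟨V, hV⟩ := hvbdd
  obtain ⟨M, hM⟩ := hμbdd
  have hMpos : 0 < M := hμmin.trans_le ((hμ _).trans (hM 0 le_rfl))
  have hV0 : 0 ≤ V := (abs_nonneg _).trans (hV 0 le_rfl)
  obtain ⟨C, hC⟩ := energy_dichotomy (kbar 0) (fun i : Fin n => kbar i.succ) τ M (V * M)
    (hkbar 0) (fun i => hkbar _) hτ
  set W : ℝ → ℝ := fun t => kbar 0 * z t ^ 2 / 2 + ∑ i : Fin n, f i t ^ 2 / (2 * kbar i.succ)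
    with hWdef
  set W' : ℝ → ℝ := fun t =>
    -(regAbs ε (v t) / μ (v t)) * (kbar 0 * z t + ∑ i, f i t) ^ 2
      + v t * (kbar 0 * z t + ∑ i, f i t) - ∑ i : Fin n, f i t ^ 2 / (τ i * kbar i.succ)
    with hW'def
  have hWder : ∀ t, 0 ≤ t → HasDerivAt W (W' t) t := by
    intro t ht
    have h1 := (((hz t ht).pow 2).const_mul (kbar 0)).div_const 2
    have h2 := HasDerivAt.fun_sum (u := Finset.univ) fun (i : Fin n) _ =>
      ((hf i t ht).pow 2).div_const (2 * kbar i.succ)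
    refine (h1.add h2).congr_deriv ?_
    simp only [hW'def]
    generalize hzd : -(regAbs ε (v t) / μ (v t)) * (kbar 0 * z t + ∑ i, f i t) + v t = zd
    have h3 : ∀ i : Fin n, ((2 : ℕ) : ℝ) * f i t ^ (2 - 1) *
        (-(τ i)⁻¹ * f i t + kbar i.succ * zd) / (2 * kbar i.succ)
        = f i t * zd - f i t ^ 2 / (τ i * kbar i.succ) := by
      intro i
      have := (hτ i).ne'
      have := (hkbar i.succ).ne'
      norm_num
      field_simp
      ring
    rw [Finset.sum_congr rfl fun i _ => h3 i, Finset.sum_sub_distrib, ← Finset.sum_mul]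
    norm_num
    linear_combination -(kbar 0 * z t + ∑ i, f i t) * hzd
  have hneg : ∀ t, 0 ≤ t → max C (W 0) ≤ W t → W' t ≤ 0 := by
    intro t ht hle
    have hd := hC (z t) (fun i => f i t) ((le_max_left _ _).trans hle)
    have hD : 0 ≤ ∑ i : Fin n, f i t ^ 2 / (τ i * kbar i.succ) :=
      Finset.sum_nonneg fun i _ => by
        have := hτ i
        have := hkbar i.succ
        positivity
    simp only [hW'def]
    generalize kbar 0 * z t + ∑ i, f i t = g at hd ⊢
    have hμpos : 0 < μ (v t) := hμmin.trans_le (hμ _)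
    have ha : |v t| / M ≤ regAbs ε (v t) / μ (v t) :=
      div_le_div₀ ((abs_nonneg _).trans (hreg _)) (hreg _) hμpos (hM t ht)
    have ha' : |v t| / M * g ^ 2 ≤ regAbs ε (v t) / μ (v t) * g ^ 2 :=
      mul_le_mul_of_nonneg_right ha (sq_nonneg g)
    have hvg : v t * g ≤ |v t| * |g| := (le_abs_self _).trans (abs_mul _ _).le
    rcases hd with hd | hd
    · rcases le_total M |g| with hg | hg
      · have : |v t| * |g| ≤ |v t| / M * g ^ 2 := by
          rw [div_mul_eq_mul_div, le_div_iff₀ hMpos, ← sq_abs g]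
          nlinarith [mul_nonneg (abs_nonneg (v t)) (abs_nonneg g)]
        linarith
      · have h1 : |v t| * |g| ≤ V * M := mul_le_mul (hV t ht) hg (abs_nonneg _) hV0
        have h2 : 0 ≤ |v t| / M * g ^ 2 := by positivity
        linarith
    · have : |v t| * |g| ≤ |v t| / M * g ^ 2 := by
        rw [div_mul_eq_mul_div, le_div_iff₀ hMpos, ← sq_abs g]
        nlinarith [mul_nonneg (abs_nonneg (v t)) (abs_nonneg g)]
      linarith
  have hbd := bounded_of_deriv_nonpos_above W W' _ hWder (le_max_right C (W 0)) hneg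
  set B := max C (W 0)
  have hS : ∀ t, ∀ i : Fin n, f i t ^ 2 / (2 * kbar i.succ)
      ≤ ∑ j : Fin n, f j t ^ 2 / (2 * kbar j.succ) := fun t i =>
    Finset.single_le_sum (f := fun j : Fin n => f j t ^ 2 / (2 * kbar j.succ))
      (fun j _ => by have := hkbar j.succ; positivity) (Finset.mem_univ i)
  have hS0 : ∀ t, 0 ≤ ∑ j : Fin n, f j t ^ 2 / (2 * kbar j.succ) := fun t =>
    Finset.sum_nonneg fun j _ => by have := hkbar j.succ; positivity
  have hB : 0 ≤ B := by
    refine le_trans ?_ (hbd 0 le_rfl)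
    have := hS0 0
    have := hkbar 0
    simp only [hWdef]
    positivity
  -- Each square is at most `q`, and `x² ≤ q` gives `|x| ≤ q + 1`.
  have habs : ∀ x q : ℝ, x ^ 2 ≤ q → |x| ≤ q + 1 := fun x q h => by
    nlinarith [sq_abs x, sq_nonneg (|x| - 1), abs_nonneg x]
  have hsum0 : 0 ≤ ∑ i : Fin n, 2 * kbar i.succ * B :=
    Finset.sum_nonneg fun i _ => by have := hkbar i.succ; positivity
  have hq0 : 0 ≤ 2 * B / kbar 0 := by have := hkbar 0; positivity
  refine ⟨2 * B / kbar 0 + ∑ i : Fin n, 2 * kbar i.succ * B + 1, fun t ht => ⟨?_, fun i => ?_⟩⟩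
  · refine habs _ _ ?_
    have h1 : z t ^ 2 ≤ 2 * B / kbar 0 := by
      rw [le_div_iff₀ (hkbar 0)]
      have := hbd t ht
      have := hS0 t
      simp only [hWdef] at *
      linarith
    linarith
  · refine habs _ _ ?_
    have h1 : f i t ^ 2 ≤ 2 * kbar i.succ * B := by
      have h2 : f i t ^ 2 / (2 * kbar i.succ) ≤ B := by
        refine le_trans ?_ (hbd t ht)
        have h3 : 0 ≤ kbar 0 * z t ^ 2 / 2 := by have := hkbar 0; positivity
        have := hS t i
        simp only [hWdef]
        linarith
      rw [div_le_iff₀ (mul_pos two_pos (hkbar _))] at h2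
      linarith
    have h2 : 2 * kbar i.succ * B ≤ ∑ j : Fin n, 2 * kbar j.succ * B :=
      Finset.single_le_sum (f := fun j : Fin n => 2 * kbar j.succ * B)
        (fun j _ => by have := hkbar j.succ; positivity) (Finset.mem_univ i)
    linarith
end

section
/- Let n ∈ ℕ, ε ≥ 0 with |y|_ε ≥ |y| for all y ∈ ℝ, positive parameters k̄₀, …, k̄ₙ, c̄₁, …, c̄ₙ, a continuous and bounded input v : [0,∞) → ℝ, and a continuous μ : ℝ → ℝ with μ(w) ≥ μ_min for all w for some μ_min > 0 and with μ bounded above on the range of v. Then every differentiable solution (z, z₁, …, zₙ) : [0,∞) → ℝ^{n+1} of the FrBD_{n+1}-GKV system ż(t) = −(|v(t)|_ε/μ(v(t))) k̄₀ (z(t) − Σ_{i=1}^n z_i(t)) + v(t), ż_i(t) = −(k̄_i/c̄_i) z_i(t) + (k̄₀/c̄_i)(z(t) − Σ_{j=1}^n z_j(t)), is bounded for all times, i.e., sup_{t ≥ 0} ‖(z(t), z₁(t), …, zₙ(t))‖ < ∞. -/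
/-!
With `s = z - ∑ zᵢ`, twice the elastic energy `V = k₀ s² + ∑ kᵢ zᵢ²` satisfies
`V' / 2 = -a (k₀ s)² + k₀ s v - ∑ (k₀ s - kᵢ zᵢ)² / cᵢ`, where `a = |v|_ε / μ(v)`.
Let `B` bound `μ ∘ v` and `M` bound `|v|`, so that `|v| ≤ B a`. If `k₀ |s| ≥ B`, the term
`-a (k₀ s)²` absorbs `k₀ s v`. If `k₀ |s| ≤ B` but some `kᵢ |zᵢ|` is large, then
`k₀ s v ≤ B M` is absorbed by the viscous dissipation of branch `i`. Hence `V' ≤ 0` whenever `V`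
exceeds a fixed level, so `V` is bounded (`le_of_deriv_nonpos_above`), and with it all the states.
-/

open Set

/-- A function on `[0, ∞)` that is nonincreasing wherever it lies above the level `R`, and starts
at or below `R`, never exceeds `R`. -/
lemma le_of_deriv_nonpos_above {f f' : ℝ → ℝ} {R : ℝ}
    (hf : ∀ t : ℝ, 0 ≤ t → HasDerivAt f (f' t) t) (h0 : f 0 ≤ R)
    (hR : ∀ t : ℝ, 0 ≤ t → R < f t → f' t ≤ 0) (t : ℝ) (ht : 0 ≤ t) : f t ≤ R := by
  -- Compare with the strictly increasing barrier `R + δ (1 + x)`, then let `δ → 0`.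
  have key : ∀ δ : ℝ, 0 < δ → f t ≤ R + δ * (1 + t) := by
    intro δ hδ
    refine image_le_of_deriv_right_lt_deriv_boundary (f := f) (f' := f') (a := 0) (b := t)
      (B := fun x => R + δ * (1 + x)) (B' := fun _ => δ) ?_ ?_ ?_ ?_ ?_ ⟨ht, le_rfl⟩
    · exact fun x hx => (hf x hx.1).continuousAt.continuousWithinAt
    · exact fun x hx => (hf x hx.1).hasDerivWithinAt
    · linarith
    · intro x
      simpa using (((hasDerivAt_id x).const_add 1).const_mul δ).const_add R
    · intro x hx hfx
      have : 0 < δ * (1 + x) := mul_pos hδ (by linarith [hx.1])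
      exact (hR x hx.1 (by rw [hfx]; linarith)).trans_lt hδ
  refine le_of_forall_pos_le_add fun e he => ?_
  have h1 : 0 < 1 + t := by linarith
  have := key (e / (1 + t)) (by positivity)
  rwa [div_mul_cancel₀ _ h1.ne'] at this

lemma abs_le_of_mul_sq_le {k x W : ℝ} (hk : 0 < k) (h : k * x ^ 2 ≤ W) : |x| ≤ W / k + 1 := by
  have h1 : x ^ 2 ≤ W / k := by
    rw [le_div_iff₀ hk]
    linarith
  nlinarith [sq_abs x, sq_nonneg (|x| - 1)]

/-- The left-hand side is half the derivative of `V`. The threshold `c i * (B * M) + 1` serves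
because its square is at least `c i * (B * M)`, so that branch `i` dissipates at least `B * M`. -/
lemma dissipation_nonpos {n : ℕ} {a v s k0 B M : ℝ} {k c y : Fin n → ℝ} (hk0 : 0 < k0)
    (hc : ∀ i, 0 < c i) (hB : 0 < B) (hM : |v| ≤ M) (ha : 0 ≤ a) (hav : |v| ≤ B * a)
    (h : B ≤ k0 * |s| ∨ ∃ i, B + (c i * (B * M) + 1) ≤ k i * |y i|) (hk : ∀ i, 0 < k i) :
    -a * (k0 * s) ^ 2 + k0 * s * v - ∑ i, (k0 * s - k i * y i) ^ 2 / c i ≤ 0 := by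
  have hnn : ∀ i ∈ Finset.univ, 0 ≤ (k0 * s - k i * y i) ^ 2 / c i := fun i _ =>
    div_nonneg (sq_nonneg _) (hc i).le
  have hsv : k0 * s * v ≤ k0 * |s| * |v| := by
    rw [mul_assoc, mul_assoc, ← abs_mul]
    exact mul_le_mul_of_nonneg_left (le_abs_self _) hk0.le
  have hs0 : 0 ≤ k0 * |s| := by positivity
  have hsq : (k0 * s) ^ 2 = (k0 * |s|) ^ 2 := by rw [mul_pow, mul_pow, sq_abs]
  by_cases hBs : B ≤ k0 * |s|
  · have h1 : k0 * |s| * |v| ≤ k0 * |s| * (B * a) := mul_le_mul_of_nonneg_left hav hs0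
    have h2 : (k0 * |s| * a) * B ≤ (k0 * |s| * a) * (k0 * |s|) :=
      mul_le_mul_of_nonneg_left hBs (by positivity)
    have h3 := Finset.sum_nonneg hnn
    rw [hsq]
    nlinarith
  · have hsB : k0 * |s| ≤ B := (not_le.mp hBs).le
    have hM0 : 0 ≤ M := (abs_nonneg v).trans hM
    have h1 : k0 * |s| * |v| ≤ B * M := mul_le_mul hsB hM (abs_nonneg v) hB.le
    have h4 : 0 ≤ a * (k0 * s) ^ 2 := by positivity
    obtain ⟨i, hi⟩ := h.resolve_left hBs
    have h2 := Finset.single_le_sum hnn (Finset.mem_univ i)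
    have hd : c i * (B * M) + 1 ≤ |k0 * s - k i * y i| := by
      have h5 := abs_sub_abs_le_abs_sub (k i * y i) (k0 * s)
      rw [abs_mul, abs_mul, abs_of_pos (hk i), abs_of_pos hk0, abs_sub_comm] at h5
      linarith
    have hx : 0 ≤ c i * (B * M) := mul_nonneg (hc i).le (mul_nonneg hB.le hM0)
    have h3 : B * M ≤ (k0 * s - k i * y i) ^ 2 / c i := by
      rw [le_div_iff₀ (hc i), ← sq_abs]
      nlinarith
    linarith

/-- **Boundedness of the FrBD_{n+1}-GKV model.** For any bounded continuous input `v`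
and any friction coefficient `μ ≥ μ_min > 0` bounded above along `v`, every
differentiable solution `(z, z₁, …, zₙ)` of the FrBD_{n+1}-GKV system is bounded. -/
theorem frbd_gkv_bounded
    (ε : ℝ) (n : ℕ) (kbar : Fin (n + 1) → ℝ) (cbar : Fin n → ℝ)
    (μ v : ℝ → ℝ) (z : ℝ → ℝ) (zi : Fin n → ℝ → ℝ) (μmin : ℝ)
    (hε : 0 ≤ ε) (hreg : ∀ y : ℝ, |y| ≤ regAbs ε y)
    (hkbar : ∀ i, 0 < kbar i) (hcbar : ∀ i, 0 < cbar i)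
    (hv : ContinuousOn v (Ici 0)) (hvbdd : ∃ M : ℝ, ∀ t : ℝ, 0 ≤ t → |v t| ≤ M)
    (hμcont : Continuous μ) (hμmin : 0 < μmin) (hμ : ∀ w : ℝ, μmin ≤ μ w)
    (hμbdd : ∃ Mμ : ℝ, ∀ t : ℝ, 0 ≤ t → μ (v t) ≤ Mμ)
    (hz : ∀ t : ℝ, 0 ≤ t → HasDerivAt z
      (-(regAbs ε (v t) / μ (v t)) * kbar 0 * (z t - ∑ i, zi i t) + v t) t)
    (hzi : ∀ i : Fin n, ∀ t : ℝ, 0 ≤ t → HasDerivAt (zi i)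
      (-(kbar i.succ / cbar i) * zi i t + (kbar 0 / cbar i) * (z t - ∑ j, zi j t)) t) :
    ∃ C : ℝ, ∀ t : ℝ, 0 ≤ t → |z t| ≤ C ∧ ∀ i : Fin n, |zi i t| ≤ C := by
  obtain ⟨M, hM⟩ := hvbdd
  obtain ⟨B, hBμ⟩ := hμbdd
  have hB : 0 < B := hμmin.trans_le ((hμ _).trans (hBμ 0 le_rfl))
  set s : ℝ → ℝ := fun t => z t - ∑ i, zi i t with hs
  set V : ℝ → ℝ := fun t => kbar 0 * s t ^ 2 + ∑ i : Fin n, kbar i.succ * zi i t ^ 2 with hV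
  set G : ℝ → ℝ := fun t => -(regAbs ε (v t) / μ (v t)) * (kbar 0 * s t) ^ 2
    + kbar 0 * s t * v t - ∑ i, (kbar 0 * s t - kbar (Fin.succ i) * zi i t) ^ 2 / cbar i with hG
  have hVderiv : ∀ t : ℝ, 0 ≤ t → HasDerivAt V (2 * G t) t := by
    intro t ht
    have h1 := (hz t ht).sub (HasDerivAt.fun_sum fun i (_ : i ∈ Finset.univ) => hzi i t ht)
    have h2 := ((h1.fun_pow 2).const_mul (kbar 0)).add
      (HasDerivAt.fun_sum fun i (_ : i ∈ Finset.univ) =>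
        ((hzi i t ht).fun_pow 2).const_mul (kbar i.succ))
    refine h2.congr_deriv ?_
    change kbar 0 * (((2 : ℕ) : ℝ) * (s t) ^ (2 - 1) *
      (-(regAbs ε (v t) / μ (v t)) * kbar 0 * s t + v t -
        ∑ i, (-(kbar i.succ / cbar i) * zi i t + (kbar 0 / cbar i) * s t))) +
      ∑ i, kbar i.succ * (((2 : ℕ) : ℝ) * (zi i t) ^ (2 - 1) *
        (-(kbar i.succ / cbar i) * zi i t + (kbar 0 / cbar i) * s t)) = 2 * G t
    have h3 : ∑ i, (kbar 0 * s t - kbar (Fin.succ i) * zi i t) ^ 2 / cbar i =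
        kbar 0 * s t * ∑ i, (-(kbar i.succ / cbar i) * zi i t + (kbar 0 / cbar i) * s t) -
        ∑ i, kbar i.succ * (zi i t *
          (-(kbar i.succ / cbar i) * zi i t + (kbar 0 / cbar i) * s t)) := by
      rw [Finset.mul_sum, ← Finset.sum_sub_distrib]
      refine Finset.sum_congr rfl fun i _ => ?_
      ring
    have h4 : ∑ i, kbar i.succ * (((2 : ℕ) : ℝ) * (zi i t) ^ (2 - 1) *
        (-(kbar i.succ / cbar i) * zi i t + (kbar 0 / cbar i) * s t)) =
        2 * ∑ i, kbar i.succ * (zi i t *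
          (-(kbar i.succ / cbar i) * zi i t + (kbar 0 / cbar i) * s t)) := by
      rw [Finset.mul_sum]
      refine Finset.sum_congr rfl fun i _ => ?_
      push_cast
      ring
    rw [h4, hG]
    simp only
    rw [h3]
    push_cast
    ring
  -- The energy level reached when every elastic force sits at its threshold.
  set R : ℝ := B ^ 2 / kbar 0 +
    ∑ i : Fin n, (B + (cbar i * (B * M) + 1)) ^ 2 / kbar i.succ with hR
  have hsq : ∀ {k x D : ℝ}, 0 < k → k * |x| ≤ D → k * x ^ 2 ≤ D ^ 2 / k := by
    intro k x D hk hx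
    rw [le_div_iff₀ hk, ← sq_abs x]
    have : 0 ≤ k * |x| := by positivity
    nlinarith
  have hdec : ∀ t : ℝ, 0 ≤ t → R < V t → 2 * G t ≤ 0 := by
    intro t ht hRV
    have hμpos : 0 < μ (v t) := hμmin.trans_le (hμ _)
    have hreg0 : 0 ≤ regAbs ε (v t) := Real.sqrt_nonneg _
    have ha : 0 ≤ regAbs ε (v t) / μ (v t) := div_nonneg hreg0 hμpos.le
    have hav : |v t| ≤ B * (regAbs ε (v t) / μ (v t)) := by
      calc |v t| ≤ regAbs ε (v t) := hreg _
        _ = μ (v t) * (regAbs ε (v t) / μ (v t)) := by field_simp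
        _ ≤ _ := mul_le_mul_of_nonneg_right (hBμ t ht) ha
    have := dissipation_nonpos (s := s t) (k := fun i => kbar (Fin.succ i))
      (y := fun i => zi i t) (hkbar 0) hcbar hB (hM t ht) ha hav (by
        by_contra! hcon
        refine absurd hRV (not_lt.mpr ?_)
        exact add_le_add (hsq (hkbar 0) hcon.1.le)
          (Finset.sum_le_sum fun i _ => hsq (hkbar _) (hcon.2 i).le)) (fun i => hkbar _)
    have hG' : G t ≤ 0 := this
    linarith
  set W : ℝ := max (V 0) R with hW
  have hVW : ∀ t : ℝ, 0 ≤ t → V t ≤ W := le_of_deriv_nonpos_above hVderiv (le_max_left _ _)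
    fun t ht h => hdec t ht ((le_max_right _ _).trans_lt h)
  have hterm : ∀ t (i : Fin n), 0 ≤ kbar i.succ * zi i t ^ 2 := fun t i =>
    mul_nonneg (hkbar _).le (sq_nonneg _)
  have hsb : ∀ t : ℝ, 0 ≤ t → |s t| ≤ W / kbar 0 + 1 := fun t ht =>
    abs_le_of_mul_sq_le (hkbar 0) ((le_add_of_nonneg_right
      (Finset.sum_nonneg fun i _ => hterm t i)).trans (hVW t ht))
  have hzb : ∀ t : ℝ, 0 ≤ t → ∀ i : Fin n, |zi i t| ≤ W / kbar i.succ + 1 := fun t ht i =>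
    abs_le_of_mul_sq_le (hkbar _) ((Finset.single_le_sum (fun j _ => hterm t j)
      (Finset.mem_univ i)).trans ((le_add_of_nonneg_left
        (mul_nonneg (hkbar 0).le (sq_nonneg _))).trans (hVW t ht)))
  refine ⟨(W / kbar 0 + 1) + ∑ i : Fin n, (W / kbar i.succ + 1), fun t ht => ⟨?_, fun i => ?_⟩⟩
  · have h1 : z t = s t + ∑ i, zi i t := by simp [hs]
    rw [h1]
    exact (abs_add_le _ _).trans (add_le_add (hsb t ht)
      ((Finset.abs_sum_le_sum_abs _ _).trans (Finset.sum_le_sum fun i _ => hzb t ht i)))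
  · have h1 := Finset.single_le_sum (f := fun i : Fin n => W / kbar i.succ + 1)
      (fun j _ => (abs_nonneg _).trans (hzb t ht j)) (Finset.mem_univ i)
    have h2 := (abs_nonneg _).trans (hsb t ht)
    have h3 := hzb t ht i
    linarith
end

section
/- Let T > 0, n ∈ ℕ, ε ≥ 0, p > 0, positive parameters k̄₀, …, k̄ₙ, τ₁, …, τₙ, a continuous v : [0,T] → ℝ, and a continuous μ : ℝ → ℝ with μ(w) > 0 for all w. Suppose (z, f₁, …, fₙ) is a continuously differentiable solution of the FrBD_{n+1}-GM system on [0,T], and set f(t) := k̄₀ z(t) + Σ_{i=1}^n f_i(t) and V(t) := (1/2) p k̄₀ z(t)² + (1/2) Σ_{i=1}^n (p/k̄_i) f_i(t)². Then the map v ↦ p f is passive with storage function V: for all t ∈ [0,T], ∫₀ᵗ p f(t′) v(t′) dt′ ≥ V(t) − V(0). -/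
/-!
Along a solution, writing `F = k̄₀ z + Σᵢ fᵢ` for the force, the storage function satisfies
`V̇ = p F ż - Σᵢ p / (k̄ᵢ τᵢ) fᵢ²`, and `ż = -(|v|_ε / μ(v)) F + v` gives
`V̇ = p F v - p (|v|_ε / μ(v)) F² - Σᵢ p / (k̄ᵢ τᵢ) fᵢ² ≤ p F v`.
Integrating this dissipation inequality over `[0, t]` gives the claim; only the supply rate `p F v`
has to be integrable, which holds because it is continuous.
-/

open Set intervalIntegral

/-- The dissipation inequality `V̇ ≤ p F v`, at a single time: `a` stands for `|v|_ε / μ(v)`,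
`y i` and `k i` for `fᵢ` and `k̄ᵢ`, and the left side is `V̇` as computed by the chain rule. -/
lemma storage_rate_le {n : ℕ} (p a k₀ z v : ℝ) (k τ y : Fin n → ℝ)
    (hp : 0 < p) (ha : 0 ≤ a) (hk : ∀ i, 0 < k i) (hτ : ∀ i, 0 < τ i) :
    (1 / 2) * p * k₀ * (2 * z * (-a * (k₀ * z + ∑ i, y i) + v))
      + (1 / 2) * ∑ i, (p / k i) *
          (2 * y i * (-(τ i)⁻¹ * y i + k i * (-a * (k₀ * z + ∑ j, y j) + v)))
      ≤ p * (k₀ * z + ∑ i, y i) * v := by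
  set F := k₀ * z + ∑ i, y i with hF
  have hsum : ∑ i, (p / k i) * (2 * y i * (-(τ i)⁻¹ * y i + k i * (-a * F + v)))
      = 2 * p * (-a * F + v) * ∑ i, y i - 2 * ∑ i, p / k i * (τ i)⁻¹ * y i ^ 2 := by
    rw [Finset.mul_sum, Finset.mul_sum, ← Finset.sum_sub_distrib]
    refine Finset.sum_congr rfl fun i _ => ?_
    have := (hk i).ne'
    have := (hτ i).ne'
    field_simp
    ring
  have hrelax : 0 ≤ ∑ i, p / k i * (τ i)⁻¹ * y i ^ 2 :=
    Finset.sum_nonneg fun i _ => by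
      have := hk i
      have := hτ i
      positivity
  have hslide : 0 ≤ p * a * F ^ 2 := by positivity
  have hS : ∑ i, y i = F - k₀ * z := by rw [hF]; ring
  rw [hsum, hS]
  linarith

/-- **Passivity of the FrBD_{n+1}-GM model.** For any continuously differentiable
solution of the GM system on `[0, T]`, with friction force `f = k̄₀ z + Σᵢ fᵢ` and
storage function `V(t) = ½ p k̄₀ z(t)² + ½ Σᵢ (p / k̄ᵢ) fᵢ(t)²`, the map `v ↦ p f`
is passive: `∫₀ᵗ p f v dt′ ≥ V(t) − V(0)` for all `t ∈ [0, T]`. -/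
theorem frbd_gm_passive
    (T ε p : ℝ) (n : ℕ) (kbar : Fin (n + 1) → ℝ) (τ : Fin n → ℝ)
    (μ v : ℝ → ℝ) (z : ℝ → ℝ) (f : Fin n → ℝ → ℝ)
    (hT : 0 < T) (hε : 0 ≤ ε) (hp : 0 < p)
    (hkbar : ∀ i, 0 < kbar i) (hτ : ∀ i, 0 < τ i)
    (hv : ContinuousOn v (Icc 0 T)) (hμcont : Continuous μ)
    (hμ : ∀ w : ℝ, 0 < μ w)
    (hz : ∀ t ∈ Icc 0 T, HasDerivAt z
      (-(regAbs ε (v t) / μ (v t)) * (kbar 0 * z t + ∑ i, f i t) + v t) t)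
    (hf : ∀ i : Fin n, ∀ t ∈ Icc 0 T, HasDerivAt (f i)
      (-(τ i)⁻¹ * f i t +
        kbar i.succ * (-(regAbs ε (v t) / μ (v t)) * (kbar 0 * z t + ∑ j, f j t) + v t)) t) :
    ∀ t ∈ Icc 0 T,
      (∫ t' in (0 : ℝ)..t, p * (kbar 0 * z t' + ∑ i, f i t') * v t') ≥
        ((1 / 2) * p * kbar 0 * (z t) ^ 2
            + (1 / 2) * ∑ i, (p / kbar i.succ) * (f i t) ^ 2)
          - ((1 / 2) * p * kbar 0 * (z 0) ^ 2
            + (1 / 2) * ∑ i, (p / kbar i.succ) * (f i 0) ^ 2) := by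
  intro t ht
  have hsub : Icc 0 t ⊆ Icc 0 T := Icc_subset_Icc_right ht.2
  have hder : ∀ s ∈ Icc 0 T, HasDerivAt
      (fun s => (1 / 2) * p * kbar 0 * (z s) ^ 2
        + (1 / 2) * ∑ i, (p / kbar i.succ) * (f i s) ^ 2)
      ((1 / 2) * p * kbar 0 * (2 * z s *
          (-(regAbs ε (v s) / μ (v s)) * (kbar 0 * z s + ∑ i, f i s) + v s))
        + (1 / 2) * ∑ i, (p / kbar i.succ) * (2 * f i s * (-(τ i)⁻¹ * f i s +
          kbar i.succ *
            (-(regAbs ε (v s) / μ (v s)) * (kbar 0 * z s + ∑ j, f j s) + v s)))) s := by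
    intro s hs
    refine HasDerivAt.add ?_ (HasDerivAt.const_mul _ (HasDerivAt.fun_sum fun i _ => ?_))
    · simpa using ((hz s hs).pow 2).const_mul ((1 / 2) * p * kbar 0)
    · simpa using ((hf i s hs).pow 2).const_mul (p / kbar i.succ)
  have hzc : ContinuousOn z (Icc 0 t) := fun s hs =>
    (hz s (hsub hs)).continuousAt.continuousWithinAt
  have hfc : ∀ i, ContinuousOn (f i) (Icc 0 t) := fun i s hs =>
    (hf i s (hsub hs)).continuousAt.continuousWithinAt
  have hsupply : ContinuousOn (fun s => p * (kbar 0 * z s + ∑ i, f i s) * v s) (Icc 0 t) :=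
    (continuousOn_const.mul ((continuousOn_const.mul hzc).add
      (continuousOn_finsetSum _ fun i _ => hfc i))).mul (hv.mono hsub)
  exact sub_le_integral_of_hasDeriv_right_of_le ht.1
    (fun s hs => (hder s (hsub hs)).continuousAt.continuousWithinAt)
    (fun s hs => (hder s (hsub (Ioo_subset_Icc_self hs))).hasDerivWithinAt)
    hsupply.integrableOn_Icc
    (fun s _ => storage_rate_le p _ (kbar 0) (z s) (v s) (fun i => kbar i.succ) τ
      (fun i => f i s) hp (div_nonneg (Real.sqrt_nonneg _) (hμ _).le) (fun i => hkbar _) hτ)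
end

section
/- Let T > 0, n ∈ ℕ, ε ≥ 0, p > 0, positive parameters k̄₀, …, k̄ₙ, c̄₁, …, c̄ₙ, a continuous v : [0,T] → ℝ, and a continuous μ : ℝ → ℝ with μ(w) > 0 for all w. Suppose (z, z₁, …, zₙ) is a continuously differentiable solution of the FrBD_{n+1}-GKV system on [0,T], and set z₀(t) := z(t) − Σ_{i=1}^n z_i(t), f(t) := k̄₀ z₀(t), and V(t) := (1/2) p k̄₀ z₀(t)² + (1/2) Σ_{i=1}^n p k̄_i z_i(t)². Then the map v ↦ p f is passive with storage function V: for all t ∈ [0,T], ∫₀ᵗ p f(t′) v(t′) dt′ ≥ V(t) − V(0). -/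
/-!
Along a solution, the storage function satisfies
`V̇ = p f v - p (|v|_ε / μ(v)) f² - ∑ᵢ p (k̄₀ z₀ - k̄ᵢ zᵢ)² / c̄ᵢ ≤ p f v`:
the frictional term is nonnegative since `μ > 0`, and each Kelvin–Voigt branch dissipates a
square. This is `dissipation_le`; integrating it over `[0, t]` gives the passivity inequality.
-/

open Set intervalIntegral

/-- The pointwise dissipation inequality `V̇ ≤ p f v`, with `z₀`, `zᵢ` and `v` frozen at a given
time: `a` is `|v|_ε / μ(v)` and `w` is the internal variable `z₀`. -/
lemma dissipation_le {n : ℕ} (p k₀ a v w : ℝ) (k c y : Fin n → ℝ)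
    (hp : 0 ≤ p) (ha : 0 ≤ a) (hc : ∀ i, 0 < c i) :
    p * k₀ * w * ((-a * k₀ * w + v) - ∑ i, (-(k i / c i) * y i + k₀ / c i * w))
      + ∑ i, p * k i * y i * (-(k i / c i) * y i + k₀ / c i * w) ≤ p * (k₀ * w) * v := by
  have hsum : p * k₀ * w * ∑ i, (-(k i / c i) * y i + k₀ / c i * w)
      - ∑ i, p * k i * y i * (-(k i / c i) * y i + k₀ / c i * w)
      = ∑ i, p * ((k₀ * w - k i * y i) ^ 2 / c i) := by
    rw [Finset.mul_sum, ← Finset.sum_sub_distrib]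
    exact Finset.sum_congr rfl fun i _ => by ring
  have hnn : 0 ≤ ∑ i, p * ((k₀ * w - k i * y i) ^ 2 / c i) :=
    Finset.sum_nonneg fun i _ => mul_nonneg hp (div_nonneg (sq_nonneg _) (hc i).le)
  have hfric : 0 ≤ p * a * (k₀ * w) ^ 2 := mul_nonneg (mul_nonneg hp ha) (sq_nonneg _)
  linarith

/-- **Passivity of the FrBD_{n+1}-GKV model.** For any continuously differentiable
solution of the GKV system on `[0, T]`, with `z₀ = z − Σᵢ zᵢ`, friction force
`f = k̄₀ z₀`, and storage function `V(t) = ½ p k̄₀ z₀(t)² + ½ Σᵢ p k̄ᵢ zᵢ(t)²`, the map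
`v ↦ p f` is passive: `∫₀ᵗ p f v dt′ ≥ V(t) − V(0)` for all `t ∈ [0, T]`. -/
theorem frbd_gkv_passive
    (T ε p : ℝ) (n : ℕ) (kbar : Fin (n + 1) → ℝ) (cbar : Fin n → ℝ)
    (μ v : ℝ → ℝ) (z : ℝ → ℝ) (zi : Fin n → ℝ → ℝ)
    (hT : 0 < T) (hε : 0 ≤ ε) (hp : 0 < p)
    (hkbar : ∀ i, 0 < kbar i) (hcbar : ∀ i, 0 < cbar i)
    (hv : ContinuousOn v (Icc 0 T)) (hμcont : Continuous μ)
    (hμ : ∀ w : ℝ, 0 < μ w)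
    (hz : ∀ t ∈ Icc 0 T, HasDerivAt z
      (-(regAbs ε (v t) / μ (v t)) * kbar 0 * (z t - ∑ i, zi i t) + v t) t)
    (hzi : ∀ i : Fin n, ∀ t ∈ Icc 0 T, HasDerivAt (zi i)
      (-(kbar i.succ / cbar i) * zi i t + (kbar 0 / cbar i) * (z t - ∑ j, zi j t)) t) :
    ∀ t ∈ Icc 0 T,
      (∫ t' in (0 : ℝ)..t, p * (kbar 0 * (z t' - ∑ i, zi i t')) * v t') ≥
        ((1 / 2) * p * kbar 0 * (z t - ∑ i, zi i t) ^ 2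
            + (1 / 2) * ∑ i, p * kbar i.succ * (zi i t) ^ 2)
          - ((1 / 2) * p * kbar 0 * (z 0 - ∑ i, zi i 0) ^ 2
            + (1 / 2) * ∑ i, p * kbar i.succ * (zi i 0) ^ 2) := by
  intro t ht
  have hsub : ∀ x ∈ Icc 0 t, x ∈ Icc 0 T := fun x hx => ⟨hx.1, hx.2.trans ht.2⟩
  have hz0 : ∀ x ∈ Icc 0 T, HasDerivAt (fun s => z s - ∑ i, zi i s) _ x := fun x hx =>
    (hz x hx).sub (HasDerivAt.fun_sum (u := Finset.univ) fun i _ => hzi i x hx)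
  have hV : ∀ x ∈ Icc 0 T, HasDerivAt
      (fun s => (1 / 2) * p * kbar 0 * (z s - ∑ i, zi i s) ^ 2
        + (1 / 2) * ∑ i, p * kbar i.succ * (zi i s) ^ 2) _ x := fun x hx =>
    (((hz0 x hx).fun_pow 2).const_mul ((1 / 2) * p * kbar 0)).add
      ((HasDerivAt.fun_sum (u := Finset.univ) fun i _ =>
        ((hzi i x hx).fun_pow 2).const_mul (p * kbar i.succ)).const_mul (1 / 2))
  refine sub_le_integral_of_hasDeriv_right_of_le ht.1
    (fun x hx => (hV x (hsub x hx)).continuousAt.continuousWithinAt)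
    (fun x hx => (hV x (hsub x (Ioo_subset_Icc_self hx))).hasDerivWithinAt) ?_ ?_
  · refine ContinuousOn.integrableOn_Icc ?_
    refine ContinuousOn.mul (fun x hx => ?_) (hv.mono hsub)
    exact (((hz0 x (hsub x hx)).continuousAt.const_mul (kbar 0)).const_mul p).continuousWithinAt
  · intro x _
    have key := dissipation_le p (kbar 0) (regAbs ε (v x) / μ (v x)) (v x)
      (z x - ∑ i, zi i x) (fun i => kbar i.succ) cbar (fun i => zi i x) hp.le
      (div_nonneg (Real.sqrt_nonneg _) (hμ _).le) hcbar
    refine le_trans (le_of_eq ?_) key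
    simp only [Finset.mul_sum, Nat.cast_ofNat]
    congr 1
    · ring
    · exact Finset.sum_congr rfl fun i _ => by ring
end

section
/- Let T > 0, n ∈ ℕ, ε ≥ 0, p, r, k₂ > 0, positive parameters k̄₀, …, k̄ₙ, τ₁, …, τₙ, continuous functions q̇, s : [0,T] → ℝ, and a continuous μ : ℝ → ℝ with μ(w) > 0 for all w. Suppose z̃, f̃₁, …, f̃ₙ : [0,T] → ℝ are continuously differentiable and satisfy the observation-error dynamics ż̃(t) = −(|q̇(t)|_ε/μ(q̇(t)))(k̄₀ z̃(t) + Σ_{i=1}^n f̃_i(t)) + k₂ s(t) and ḟ̃_i(t) = −τ_i⁻¹ f̃_i(t) + k̄_i ż̃(t). Define f̃(t) := k̄₀ z̃(t) + Σ_{i=1}^n f̃_i(t), F̃(t) := r p f̃(t), and V(t) := (1/2) k̄₀ z̃(t)² + (1/2) Σ_{i=1}^n (1/k̄_i) f̃_i(t)². Then, for all t ∈ [0,T], ∫₀ᵗ F̃(t′) s(t′) dt′ ≥ (r p / k₂)(V(t) − V(0)); in particular, with β₂ := (r p / k₂) V(0) ≥ 0, ∫₀ᵗ F̃(t′) s(t′)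 dt′ ≥ −β₂ for all t ∈ [0,T], i.e., the map s ↦ F̃ is passive. -/
/-!
Energy balance along the error dynamics: writing `f̃ = k̄₀ z̃ + Σᵢ f̃ᵢ`, the storage function satisfies
`V' = k̄₀ z̃ z̃' + Σᵢ f̃ᵢ f̃ᵢ' / k̄ᵢ = f̃ z̃' - Σᵢ f̃ᵢ² / (τᵢ k̄ᵢ)`, and
`f̃ z̃' = -(|q̇|_ε / μ(q̇)) f̃² + k₂ f̃ s`. Both dissipation terms are nonpositive, so
`(r p / k₂) V' ≤ r p f̃ s = F̃ s`. Integrating this bound over `[0, t]` gives the passivity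
inequality, and `V ≥ 0` gives the lower bound `-β₂`.
-/

open Set intervalIntegral

/-- **Passivity of the friction observation-error dynamics.** For the FrBD_{n+1}-GM
observation-error dynamics at a robot joint, with `f̃ = k̄₀ z̃ + Σᵢ f̃ᵢ`, torque error
`F̃ = r p f̃`, and storage function `V(t) = ½ k̄₀ z̃(t)² + ½ Σᵢ (1/k̄ᵢ) f̃ᵢ(t)²`, one has
`∫₀ᵗ F̃ s dt′ ≥ (r p / k₂)(V(t) − V(0)) ≥ −β₂` with `β₂ = (r p / k₂) V(0) ≥ 0`;
i.e., the map `s ↦ F̃` is passive. -/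
theorem frbd_gm_observer_error_passive
    (T ε p r k₂ : ℝ) (n : ℕ) (kbar : Fin (n + 1) → ℝ) (τ : Fin n → ℝ)
    (qdot s : ℝ → ℝ) (μ : ℝ → ℝ) (zt : ℝ → ℝ) (ft : Fin n → ℝ → ℝ)
    (hT : 0 < T) (hε : 0 ≤ ε) (hp : 0 < p) (hr : 0 < r) (hk₂ : 0 < k₂)
    (hkbar : ∀ i, 0 < kbar i) (hτ : ∀ i, 0 < τ i)
    (hqdot : ContinuousOn qdot (Icc 0 T)) (hs : ContinuousOn s (Icc 0 T))
    (hμcont : Continuous μ) (hμ : ∀ w : ℝ, 0 < μ w)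
    (hzt : ∀ t ∈ Icc 0 T, HasDerivAt zt
      (-(regAbs ε (qdot t) / μ (qdot t)) * (kbar 0 * zt t + ∑ i, ft i t) + k₂ * s t) t)
    (hft : ∀ i : Fin n, ∀ t ∈ Icc 0 T, HasDerivAt (ft i)
      (-(τ i)⁻¹ * ft i t +
        kbar i.succ *
          (-(regAbs ε (qdot t) / μ (qdot t)) * (kbar 0 * zt t + ∑ j, ft j t) + k₂ * s t)) t) :
    (∀ t ∈ Icc 0 T,
      (∫ t' in (0 : ℝ)..t, r * p * (kbar 0 * zt t' + ∑ i, ft i t') * s t') ≥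
        (r * p / k₂) *
          (((1 / 2) * kbar 0 * (zt t) ^ 2 + (1 / 2) * ∑ i, (1 / kbar i.succ) * (ft i t) ^ 2)
            - ((1 / 2) * kbar 0 * (zt 0) ^ 2
              + (1 / 2) * ∑ i, (1 / kbar i.succ) * (ft i 0) ^ 2))) ∧
    (0 ≤ (r * p / k₂) *
        ((1 / 2) * kbar 0 * (zt 0) ^ 2 + (1 / 2) * ∑ i, (1 / kbar i.succ) * (ft i 0) ^ 2) ∧
      ∀ t ∈ Icc 0 T,
        (∫ t' in (0 : ℝ)..t, r * p * (kbar 0 * zt t' + ∑ i, ft i t') * s t') ≥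
          -((r * p / k₂) *
            ((1 / 2) * kbar 0 * (zt 0) ^ 2
              + (1 / 2) * ∑ i, (1 / kbar i.succ) * (ft i 0) ^ 2))) := by
  have hV : ∀ t, 0 ≤ (1 / 2) * kbar 0 * (zt t) ^ 2
      + (1 / 2) * ∑ i : Fin n, (1 / kbar i.succ) * (ft i t) ^ 2 := by
    intro t
    have h0 := hkbar 0
    have h1 : 0 ≤ ∑ i : Fin n, (1 / kbar i.succ) * (ft i t) ^ 2 :=
      Finset.sum_nonneg fun i _ => by
        have := hkbar i.succ
        positivity
    positivity
  have hc : 0 < r * p / k₂ := by positivity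
  have main : ∀ t ∈ Icc 0 T,
      (∫ t' in (0 : ℝ)..t, r * p * (kbar 0 * zt t' + ∑ i, ft i t') * s t') ≥
        (r * p / k₂) *
          (((1 / 2) * kbar 0 * (zt t) ^ 2 + (1 / 2) * ∑ i, (1 / kbar i.succ) * (ft i t) ^ 2)
            - ((1 / 2) * kbar 0 * (zt 0) ^ 2
              + (1 / 2) * ∑ i, (1 / kbar i.succ) * (ft i 0) ^ 2)) := by
    intro t ht
    have hsub : Icc 0 t ⊆ Icc 0 T := Icc_subset_Icc_right ht.2
    -- the derivative is left as `_`: unification with the chain-rule term fills it in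
    have hder : ∀ x ∈ Icc 0 T, HasDerivAt
        (fun u => (r * p / k₂) * ((1 / 2) * kbar 0 * (zt u) ^ 2
          + (1 / 2) * ∑ i, (1 / kbar i.succ) * (ft i u) ^ 2)) _ x := fun x hx =>
      ((((hzt x hx).pow 2).const_mul ((1 / 2) * kbar 0)).add
        ((HasDerivAt.fun_sum (u := Finset.univ) fun i _ =>
          ((hft i x hx).pow 2).const_mul (1 / kbar i.succ)).const_mul (1 / 2))).const_mul
        (r * p / k₂)
    have hzc : ContinuousOn zt (Icc 0 t) := fun x hx =>
      (hzt x (hsub hx)).continuousAt.continuousWithinAt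
    have hfc : ∀ i, ContinuousOn (ft i) (Icc 0 t) := fun i x hx =>
      (hft i x (hsub hx)).continuousAt.continuousWithinAt
    have hsc : ContinuousOn s (Icc 0 t) := hs.mono hsub
    have hφ : ContinuousOn
        (fun t' => r * p * (kbar 0 * zt t' + ∑ i, ft i t') * s t') (Icc 0 t) := by
      fun_prop
    have key := sub_le_integral_of_hasDeriv_right_of_le ht.1
      (fun x hx => (hder x (hsub hx)).continuousAt.continuousWithinAt)
      (fun x hx => (hder x (hsub (Ioo_subset_Icc_self hx))).hasDerivWithinAt)
      hφ.integrableOn_Icc ?_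
    · rw [ge_iff_le, mul_sub]
      exact key
    · intro x _
      set a := regAbs ε (qdot x) / μ (qdot x) with ha
      have ha0 : 0 ≤ a := div_nonneg (Real.sqrt_nonneg _) (hμ _).le
      set F := kbar 0 * zt x + ∑ i, ft i x with hF
      -- each branch contributes its power `f̃ᵢ z̃'` minus its viscous dissipation
      have hsum : ∑ i : Fin n, 1 / kbar i.succ * ((2 : ℕ) * ft i x ^ (2 - 1) *
            (-(τ i)⁻¹ * ft i x + kbar i.succ * (-a * F + k₂ * s x)))
          = 2 * ((∑ i, ft i x) * (-a * F + k₂ * s x))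
            - 2 * ∑ i, (kbar i.succ)⁻¹ * (τ i)⁻¹ * ft i x ^ 2 := by
        rw [Finset.sum_mul, Finset.mul_sum, Finset.mul_sum, ← Finset.sum_sub_distrib]
        refine Finset.sum_congr rfl fun i _ => ?_
        have h1 := (hkbar i.succ).ne'
        have h2 := (hτ i).ne'
        norm_num
        field_simp
        ring
      have hD : 0 ≤ ∑ i : Fin n, (kbar i.succ)⁻¹ * (τ i)⁻¹ * ft i x ^ 2 :=
        Finset.sum_nonneg fun i _ => by
          have h1 := hkbar i.succ
          have h2 := hτ i
          positivity
      rw [hsum]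
      set D := ∑ i : Fin n, (kbar i.succ)⁻¹ * (τ i)⁻¹ * ft i x ^ 2
      have hgoal : r * p * F * s x - r * p / k₂ * (a * F ^ 2 + D)
          = r * p / k₂ * (F * (-a * F + k₂ * s x) - D) := by
        field_simp
        ring
      have hdis : 0 ≤ r * p / k₂ * (a * F ^ 2 + D) := by positivity
      calc _ = r * p / k₂ * (F * (-a * F + k₂ * s x) - D) := by
            rw [show F * (-a * F + k₂ * s x) = kbar 0 * zt x * (-a * F + k₂ * s x)
              + (∑ i, ft i x) * (-a * F + k₂ * s x) by rw [← add_mul]]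
            norm_num only [Nat.cast_ofNat, pow_one]
            ring
        _ ≤ _ := by linarith
  refine ⟨main, mul_nonneg hc.le (hV 0), fun t ht => ?_⟩
  have h1 := main t ht
  have h2 := mul_nonneg hc.le (hV t)
  rw [mul_sub] at h1
  linarith
end
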